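/- arXiv:2106.10473 — 6 statements merged into one kernel-verified Lean document; each statement's English description precedes it below -/
import Mathlib

section
/- Fix prices p ∈ [0,1] and q = αp with α ∈ [0,1]. For the revenue function R(p,q,M) = (1−α)·p·I(M), where I(M) is the total improvement of social visibility of all participating requesters when the set of participating suppliers is M, the map M ↦ R(p,q,M) is monotone nondecreasing and submodular: for all supplier sets A ⊆ B and any supplier u ∉ B, R(p,q,A) ≤ R(p,q,B) and R(p,q,A∪{u}) − R(p,q,A) ≥ R(p,q,B∪{u}) − R(p,q,B). -/
/-- `walkLen E n v u` : there is a directed walk of exactly `n` edges from `v` to `u`. -/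
def walkLen {U : Type*} (E : U → U → Prop) : ℕ → U → U → Prop
  | 0, v, u => v = u
  | n + 1, v, u => ∃ w, E v w ∧ walkLen E n w u

/-- Directed distance from `v` to `u` (`+∞` if `u` is not reachable from `v`). -/
noncomputable def graphDist {U : Type*} (E : U → U → Prop) (v u : U) : ℕ∞ :=
  sInf {n : ℕ∞ | ∃ m : ℕ, (m : ℕ∞) = n ∧ walkLen E m v u}

/-- The `d`-visible set of `u` : all `v` with `D(v,u;G) ≤ d`. -/
noncomputable def visSet {U : Type*} (E : U → U → Prop) (u : U) (d : ℕ) : Set U :=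
  {v | graphDist E v u ≤ (d : ℕ∞)}

/-- Edge relation of `G̃(M) = (U, E ∪ (M × R̃))`: the graph obtained from `G` by adding an
edge from each supplier in `M` to each requester in `R̃`. -/
def newE {U : Type*} (E : U → U → Prop) (Rt M : Finset U) : U → U → Prop :=
  fun a b => E a b ∨ (a ∈ M ∧ b ∈ Rt)

/-- `I_r(M) = |V(r,τ;G̃(M)) \ V(r,τ;G)|`, the improvement of social visibility of
requester `r` when the set of participating suppliers is `M`. -/
noncomputable def improvement {U : Type*} (E : U → U → Prop) (τ : ℕ) (Rt : Finset U)
    (r : U) (M : Finset U) : ℕ :=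
  ((visSet (newE E Rt M) r τ) \ (visSet E r τ)).ncard

/-- `I(M) = Σ_{r ∈ R̃} I_r(M)`, the total improvement of social visibility of all
participating requesters. -/
noncomputable def totalImprovement {U : Type*} (E : U → U → Prop) (τ : ℕ)
    (Rt : Finset U) (M : Finset U) : ℕ :=
  ∑ r ∈ Rt, improvement E τ Rt r M

theorem mem_visSet_iff {U : Type*} (E : U → U → Prop) (v u : U) (d : ℕ) :
    v ∈ visSet E u d ↔ ∃ m ≤ d, walkLen E m v u := by
  simp only [visSet, graphDist, Set.mem_ofPred_eq]
  constructor
  · intro h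
    have hne : {n : ℕ∞ | ∃ m : ℕ, (m : ℕ∞) = n ∧ walkLen E m v u}.Nonempty := by
      by_contra hemp
      rw [Set.not_nonempty_iff_eq_empty.mp hemp, sInf_empty] at h
      exact absurd h (by simp)
    obtain ⟨m, hm, hw⟩ := csInf_mem hne
    rw [← hm] at h
    exact ⟨m, by exact_mod_cast h, hw⟩
  · rintro ⟨m, hm, hw⟩
    exact sInf_le_of_le (b := (m : ℕ∞)) ⟨m, rfl, hw⟩ (by exact_mod_cast hm)

/-- A walk in the augmented graph either uses no new edge, or its part before the first new
edge is a strictly shorter walk in the original graph that ends at a supplier. -/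
theorem walkLen_newE_cases {U : Type*} {E : U → U → Prop} {Rt M : Finset U} {n : ℕ} {v r : U}
    (h : walkLen (newE E Rt M) n v r) :
    walkLen E n v r ∨ ∃ m ∈ M, ∃ k < n, walkLen E k v m := by
  induction n generalizing v with
  | zero => exact Or.inl h
  | succ n ih =>
    obtain ⟨w, hvw | ⟨hv, -⟩, hw⟩ := h
    · rcases ih hw with hw | ⟨m, hm, k, hk, hw⟩
      · exact Or.inl ⟨w, hvw, hw⟩
      · exact Or.inr ⟨m, hm, k + 1, by omega, w, hvw, hw⟩
    · exact Or.inr ⟨v, hv, 0, n.succ_pos, rfl⟩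

theorem walkLen_mono {U : Type*} {E F : U → U → Prop} (hEF : ∀ a b, E a b → F a b)
    {n : ℕ} {v r : U} (h : walkLen E n v r) : walkLen F n v r := by
  induction n generalizing v with
  | zero => exact h
  | succ n ih =>
    obtain ⟨w, hvw, hw⟩ := h
    exact ⟨w, hEF _ _ hvw, ih hw⟩

theorem walkLen_succ_of_edge {U : Type*} {E : U → U → Prop} {n : ℕ} {v m r : U}
    (h : walkLen E n v m) (hmr : E m r) : walkLen E (n + 1) v r := by
  induction n generalizing v with
  | zero =>
    obtain rfl : v = m := h
    exact ⟨r, hmr, rfl⟩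
  | succ n ih =>
    obtain ⟨w, hvw, hw⟩ := h
    exact ⟨w, hvw, ih hw⟩

theorem mem_visSet_newE_iff {U : Type*} (E : U → U → Prop) (τ : ℕ) {Rt : Finset U}
    (M : Finset U) {r : U} (hr : r ∈ Rt) (v : U) :
    v ∈ visSet (newE E Rt M) r τ ↔
      v ∈ visSet E r τ ∨ ∃ m ∈ M, ∃ k < τ, walkLen E k v m := by
  simp only [mem_visSet_iff]
  constructor
  · rintro ⟨n, hn, hw⟩
    rcases walkLen_newE_cases hw with hw | ⟨m, hm, k, hk, hw⟩
    · exact Or.inl ⟨n, hn, hw⟩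
    · exact Or.inr ⟨m, hm, k, by omega, hw⟩
  · rintro (⟨n, hn, hw⟩ | ⟨m, hm, k, hk, hw⟩)
    · exact ⟨n, hn, walkLen_mono (fun _ _ => Or.inl) hw⟩
    · exact ⟨k + 1, hk,
        walkLen_succ_of_edge (walkLen_mono (fun _ _ => Or.inl) hw) (Or.inr ⟨hm, hr⟩)⟩

theorem visSet_newE_mono {U : Type*} (E : U → U → Prop) (τ : ℕ) {Rt A B : Finset U}
    (hAB : A ⊆ B) {r : U} (hr : r ∈ Rt) :
    visSet (newE E Rt A) r τ ⊆ visSet (newE E Rt B) r τ := by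
  intro v
  rw [mem_visSet_newE_iff E τ A hr, mem_visSet_newE_iff E τ B hr]
  exact Or.imp_right fun ⟨m, hm, h⟩ => ⟨m, hAB hm, h⟩

theorem visSet_newE_union {U : Type*} [DecidableEq U] (E : U → U → Prop) (τ : ℕ)
    {Rt : Finset U} (A B : Finset U) {r : U} (hr : r ∈ Rt) :
    visSet (newE E Rt (A ∪ B)) r τ =
      visSet (newE E Rt A) r τ ∪ visSet (newE E Rt B) r τ := by
  ext v
  simp only [Set.mem_union, mem_visSet_newE_iff E τ _ hr, Finset.mem_union, or_and_right,
    exists_or]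
  exact or_or_distrib_left

theorem Set.ncard_union_add_ncard_le_of_subset {U : Type*} [Finite U] {S T : Set U}
    (hST : S ⊆ T) (W : Set U) :
    (T ∪ W).ncard + S.ncard ≤ (S ∪ W).ncard + T.ncard := by
  have hT := Set.ncard_sdiff_add_ncard W T
  have hS := Set.ncard_sdiff_add_ncard W S
  have hle : (W \ T).ncard ≤ (W \ S).ncard :=
    Set.ncard_le_ncard (Set.sdiff_subset_sdiff_right hST)
  rw [Set.union_comm T, Set.union_comm S]
  omega

theorem improvement_mono {U : Type*} [Finite U] (E : U → U → Prop) (τ : ℕ)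
    {Rt A B : Finset U} (hAB : A ⊆ B) {r : U} (hr : r ∈ Rt) :
    improvement E τ Rt r A ≤ improvement E τ Rt r B :=
  Set.ncard_le_ncard (Set.sdiff_subset_sdiff_left (visSet_newE_mono E τ hAB hr))

theorem improvement_union_add_le {U : Type*} [Finite U] [DecidableEq U] (E : U → U → Prop)
    (τ : ℕ) {Rt A B : Finset U} (hAB : A ⊆ B) (C : Finset U) {r : U} (hr : r ∈ Rt) :
    improvement E τ Rt r (B ∪ C) + improvement E τ Rt r A ≤
      improvement E τ Rt r (A ∪ C) + improvement E τ Rt r B := by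
  simp only [improvement, visSet_newE_union E τ _ _ hr, Set.union_sdiff_distrib]
  exact Set.ncard_union_add_ncard_le_of_subset
    (Set.sdiff_subset_sdiff_left (visSet_newE_mono E τ hAB hr)) _

theorem totalImprovement_mono {U : Type*} [Finite U] (E : U → U → Prop) (τ : ℕ)
    (Rt : Finset U) {A B : Finset U} (hAB : A ⊆ B) :
    totalImprovement E τ Rt A ≤ totalImprovement E τ Rt B :=
  Finset.sum_le_sum fun _ hr => improvement_mono E τ hAB hr

theorem totalImprovement_union_add_le {U : Type*} [Finite U] [DecidableEq U]
    (E : U → U → Prop) (τ : ℕ) (Rt : Finset U) {A B : Finset U} (hAB : A ⊆ B)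
    (C : Finset U) :
    totalImprovement E τ Rt (B ∪ C) + totalImprovement E τ Rt A ≤
      totalImprovement E τ Rt (A ∪ C) + totalImprovement E τ Rt B := by
  simp only [totalImprovement, ← Finset.sum_add_distrib]
  exact Finset.sum_le_sum fun _ hr => improvement_union_add_le E τ hAB C hr

/-- with fixed prices `p ∈ [0,1]` and `q = α·p`, `α ∈ [0,1]`, the revenue
`R(p,q,M) = (1-α)·p·I(M)` is monotone nondecreasing and submodular in the supplier set. -/
theorem revenue_monotone_submodular
    {U : Type*} [Fintype U] [DecidableEq U] (E : U → U → Prop)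
    (hNoLoop : ∀ u : U, ¬ E u u) (τ : ℕ) (Rt : Finset U)
    (p q α : ℝ) (hp : p ∈ Set.Icc (0 : ℝ) 1) (hα : α ∈ Set.Icc (0 : ℝ) 1)
    (hq : q = α * p)
    (Rev : Finset U → ℝ)
    (hRev : ∀ M : Finset U, Rev M = (1 - α) * p * (totalImprovement E τ Rt M : ℝ))
    (A B : Finset U) (hAB : A ⊆ B) (u : U) (hu : u ∉ B) :
    Rev A ≤ Rev B ∧ Rev (A ∪ {u}) - Rev A ≥ Rev (B ∪ {u}) - Rev B := by
  have hc : 0 ≤ (1 - α) * p := mul_nonneg (sub_nonneg.mpr hα.2) hp.1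
  have hmono : (totalImprovement E τ Rt A : ℝ) ≤ totalImprovement E τ Rt B := by
    exact_mod_cast totalImprovement_mono E τ Rt hAB
  have hsub : (totalImprovement E τ Rt (B ∪ {u}) : ℝ) + totalImprovement E τ Rt A ≤
      totalImprovement E τ Rt (A ∪ {u}) + totalImprovement E τ Rt B := by
    exact_mod_cast totalImprovement_union_add_le E τ Rt hAB {u}
  simp only [hRev, ← mul_sub, ge_iff_le]
  exact ⟨mul_le_mul_of_nonneg_left hmono hc,
    mul_le_mul_of_nonneg_left (by linarith) hc⟩
end

section
/- The greedy algorithm for maximizing a monotone submodular function under a cardinality constraint achieves a (1 − 1/e)-approximation: let S be a finite ground set, let f be a monotone nondecreasing submodular set function on subsets of S with f(∅) = 0, and let b ∈ ℕ with b ≥ 1. Define the greedy sets M_0 = ∅ and, for t = 1,…,b, M_t = M_{t−1} ∪ {u_t} where u_t ∈ S maximizes f(M_{t−1} ∪ {u}) − f(M_{t−1}) over u ∈ S. Then f(M_b) ≥ (1 − 1/e) · max{ f(M) : M ⊆ S, |M| ≤ b }. -/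
/-- For a submodular `f`, if every single element adds at most `g` to `f A`, then a set `T`
adds at most `T.card * g`. -/
theorem submodular_union_sub_le_card_mul {ι : Type*} [DecidableEq ι] (f : Finset ι → ℝ)
    (hsub : ∀ A B : Finset ι, A ⊆ B → ∀ u : ι, u ∉ B →
      f (insert u A) - f A ≥ f (insert u B) - f B)
    (A : Finset ι) (g : ℝ) (hg : 0 ≤ g) (hA : ∀ v, f (insert v A) - f A ≤ g) (T : Finset ι) :
    f (A ∪ T) - f A ≤ T.card * g := by
  induction T using Finset.induction_on with
  | empty => simp
  | insert v T hv ih =>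
    rw [Finset.card_insert_of_notMem hv, Finset.union_insert]
    push_cast
    by_cases hvAT : v ∈ A ∪ T
    · rw [Finset.insert_eq_of_mem hvAT]
      linarith
    · linarith [hsub A (A ∪ T) Finset.subset_union_left v hvAT, hA v]

/-- After `t` greedy steps, the gap to any set `T` of size at most `b` has shrunk by the factor
`(1 - 1 / b) ^ t`. -/
theorem greedy_gap_le {ι : Type*} [DecidableEq ι] (f : Finset ι → ℝ)
    (hempty : f ∅ = 0)
    (hmono : ∀ A B : Finset ι, A ⊆ B → f A ≤ f B)
    (hsub : ∀ A B : Finset ι, A ⊆ B → ∀ u : ι, u ∉ B →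
      f (insert u A) - f A ≥ f (insert u B) - f B)
    (b : ℕ) (hb : 1 ≤ b) (M : ℕ → Finset ι) (u : ℕ → ι) (hM0 : M 0 = ∅)
    (hgreedy : ∀ t : ℕ, 1 ≤ t → t ≤ b →
      M t = insert (u t) (M (t - 1)) ∧
        ∀ v : ι, f (insert v (M (t - 1))) ≤ f (insert (u t) (M (t - 1))))
    (T : Finset ι) (hT : T.card ≤ b) (t : ℕ) (ht : t ≤ b) :
    f T - f (M t) ≤ (1 - 1 / (b : ℝ)) ^ t * f T := by
  have hb1 : (1 : ℝ) ≤ b := by exact_mod_cast hb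
  have hb0 : (0 : ℝ) < b := by linarith
  induction t with
  | zero => simp [hM0, hempty]
  | succ t ih =>
    obtain ⟨hMt, hmax⟩ := hgreedy (t + 1) (by omega) ht
    simp only [Nat.add_sub_cancel] at hMt hmax
    rw [← hMt] at hmax
    have hg : 0 ≤ f (M (t + 1)) - f (M t) :=
      sub_nonneg.2 (hmono _ _ (hMt ▸ Finset.subset_insert _ _))
    have hgain : f T - f (M t) ≤ b * (f (M (t + 1)) - f (M t)) :=
      calc f T - f (M t) ≤ f (M t ∪ T) - f (M t) :=
            sub_le_sub_right (hmono _ _ Finset.subset_union_right) _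
        _ ≤ T.card * (f (M (t + 1)) - f (M t)) :=
            submodular_union_sub_le_card_mul f hsub _ _ hg
              (fun v => sub_le_sub_right (hmax v) _) T
        _ ≤ b * (f (M (t + 1)) - f (M t)) := by gcongr
    have hstep : (f T - f (M t)) / b ≤ f (M (t + 1)) - f (M t) := by
      rwa [div_le_iff₀' hb0]
    have hc : 0 ≤ 1 - 1 / (b : ℝ) := sub_nonneg.2 ((div_le_one hb0).2 hb1)
    calc f T - f (M (t + 1)) ≤ (1 - 1 / (b : ℝ)) * (f T - f (M t)) := by
          rw [sub_mul, one_mul, one_div_mul_eq_div]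
          linarith
      _ ≤ (1 - 1 / (b : ℝ)) * ((1 - 1 / (b : ℝ)) ^ t * f T) :=
          mul_le_mul_of_nonneg_left (ih (by omega)) hc
      _ = (1 - 1 / (b : ℝ)) ^ (t + 1) * f T := by ring

/-- the greedy algorithm for maximizing a monotone submodular function
under a cardinality constraint `b` achieves a `(1 - 1/e)`-approximation.
The ground set is the finite type `ι`. -/
theorem greedy_one_sub_inv_e_approx
    {ι : Type*} [DecidableEq ι] [Fintype ι] [Nonempty ι]
    (f : Finset ι → ℝ)
    (hempty : f ∅ = 0)
    (hmono : ∀ A B : Finset ι, A ⊆ B → f A ≤ f B)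
    (hsub : ∀ A B : Finset ι, A ⊆ B → ∀ u : ι, u ∉ B →
      f (insert u A) - f A ≥ f (insert u B) - f B)
    (b : ℕ) (hb : 1 ≤ b)
    (M : ℕ → Finset ι) (u : ℕ → ι)
    (hM0 : M 0 = ∅)
    (hgreedy : ∀ t : ℕ, 1 ≤ t → t ≤ b →
      M t = insert (u t) (M (t - 1)) ∧
        ∀ v : ι, f (insert v (M (t - 1))) ≤ f (insert (u t) (M (t - 1)))) :
    f (M b) ≥ (1 - 1 / Real.exp 1) *
      sSup {x : ℝ | ∃ T : Finset ι, T.card ≤ b ∧ x = f T} := by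
  have he : 0 < 1 - 1 / Real.exp 1 := by
    rw [sub_pos, div_lt_one (Real.exp_pos 1)]
    exact Real.one_lt_exp_iff.2 one_pos
  rw [ge_iff_le, ← le_div_iff₀' he]
  refine csSup_le ⟨f ∅, ∅, by simp, rfl⟩ ?_
  rintro _ ⟨T, hT, rfl⟩
  rw [le_div_iff₀' he]
  have hfT : 0 ≤ f T := hempty ▸ hmono _ _ (Finset.empty_subset T)
  have hgap := greedy_gap_le f hempty hmono hsub b hb M u hM0 hgreedy T hT b le_rfl
  have hpow : (1 - 1 / (b : ℝ)) ^ b ≤ 1 / Real.exp 1 := by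
    rw [one_div (Real.exp 1), ← Real.exp_neg]
    exact Real.one_sub_div_pow_le_exp_neg (by exact_mod_cast hb)
  linarith [mul_le_mul_of_nonneg_right hpow hfT]
end

section
/- Greedy per-step guarantee: let S be a finite ground set, let f be a monotone nondecreasing submodular set function on subsets of S with f(∅) = 0, and let b ∈ ℕ with b ≥ 1. Define the greedy sets M_0 = ∅ and, for t ≥ 1, M_t = M_{t−1} ∪ {u_t} where u_t ∈ S maximizes f(M_{t−1} ∪ {u}) − f(M_{t−1}) over u ∈ S. Then for every t with 1 ≤ t ≤ b, f(M_t) ≥ (1 − (1 − 1/b)^t) · max{ f(M) : M ⊆ S, |M| ≤ b }. -/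
/-- The gain of adding a whole set `T` to `A` is at most the sum of the single-element gains. -/
theorem submodular_union_sub_le_sum {ι : Type*} [DecidableEq ι]
    (f : Finset ι → ℝ) (hmono : ∀ A B : Finset ι, A ⊆ B → f A ≤ f B)
    (hsub : ∀ A B : Finset ι, A ⊆ B → ∀ u : ι, u ∉ B →
      f (insert u A) - f A ≥ f (insert u B) - f B) (A T : Finset ι) :
    f (A ∪ T) - f A ≤ ∑ v ∈ T, (f (insert v A) - f A) := by
  induction T using Finset.induction_on with
  | empty => simp
  | insert v T hv ih =>
    rw [Finset.sum_insert hv, Finset.union_insert]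
    by_cases hmem : v ∈ A ∪ T
    · rw [Finset.insert_eq_of_mem hmem]
      linarith [hmono A (insert v A) (Finset.subset_insert v A)]
    · linarith [hsub A (A ∪ T) Finset.subset_union_left v hmem]

/-- If every single-element gain over `A` is at most `d ≥ 0`, then any set of at most `b` elements
has value at most `f A + b * d`. -/
theorem submodular_le_add_card_mul {ι : Type*} [DecidableEq ι]
    (f : Finset ι → ℝ) (hmono : ∀ A B : Finset ι, A ⊆ B → f A ≤ f B)
    (hsub : ∀ A B : Finset ι, A ⊆ B → ∀ u : ι, u ∉ B →
      f (insert u A) - f A ≥ f (insert u B) - f B) (A T : Finset ι) (b : ℕ) (hT : T.card ≤ b)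
    (d : ℝ) (hd : 0 ≤ d) (hgain : ∀ v, f (insert v A) - f A ≤ d) :
    f T ≤ f A + b * d := by
  have hsum : ∑ v ∈ T, (f (insert v A) - f A) ≤ T.card * d := by
    simpa using Finset.sum_le_card_nsmul T _ d fun v _ => hgain v
  have hcard : (T.card : ℝ) * d ≤ b * d := by gcongr
  linarith [hmono T (A ∪ T) Finset.subset_union_right,
    submodular_union_sub_le_sum f hmono hsub A T]

/-- greedy per-step guarantee: after `t` greedy steps (`1 ≤ t ≤ b`), the
greedy set achieves at least a `(1 - (1 - 1/b)^t)` fraction of the optimum under the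
cardinality constraint `b`.  The ground set is the finite type `ι`. -/
theorem greedy_per_step_guarantee
    {ι : Type*} [DecidableEq ι] [Fintype ι] [Nonempty ι]
    (f : Finset ι → ℝ)
    (hempty : f ∅ = 0)
    (hmono : ∀ A B : Finset ι, A ⊆ B → f A ≤ f B)
    (hsub : ∀ A B : Finset ι, A ⊆ B → ∀ u : ι, u ∉ B →
      f (insert u A) - f A ≥ f (insert u B) - f B)
    (b : ℕ) (hb : 1 ≤ b)
    (M : ℕ → Finset ι) (u : ℕ → ι)
    (hM0 : M 0 = ∅)
    (hgreedy : ∀ t : ℕ, 1 ≤ t →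
      M t = insert (u t) (M (t - 1)) ∧
        ∀ v : ι, f (insert v (M (t - 1))) ≤ f (insert (u t) (M (t - 1)))) :
    ∀ t : ℕ, 1 ≤ t → t ≤ b →
      f (M t) ≥ (1 - (1 - 1 / (b : ℝ)) ^ t) *
        sSup {x : ℝ | ∃ T : Finset ι, T.card ≤ b ∧ x = f T} := by
  intro t _ _
  set opt := sSup {x : ℝ | ∃ T : Finset ι, T.card ≤ b ∧ x = f T}
  have hb0 : (0 : ℝ) < b := by exact_mod_cast hb
  have hcontract : (0 : ℝ) ≤ 1 - 1 / b := by
    rw [sub_nonneg, div_le_one hb0]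
    exact_mod_cast hb
  suffices h : ∀ s, opt - f (M s) ≤ (1 - 1 / (b : ℝ)) ^ s * opt by linarith [h t]
  intro s
  induction s with
  | zero => simp [hM0, hempty]
  | succ s ih =>
    obtain ⟨hM, hmax⟩ := hgreedy (s + 1) (Nat.le_add_left 1 s)
    rw [Nat.add_sub_cancel] at hM hmax
    rw [← hM] at hmax
    have hstep : f (M s) ≤ f (M (s + 1)) := hmono _ _ (hM ▸ Finset.subset_insert _ _)
    have hopt : opt ≤ f (M s) + b * (f (M (s + 1)) - f (M s)) := by
      refine csSup_le ⟨f ∅, ∅, by simp, rfl⟩ ?_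
      rintro _ ⟨T, hT, rfl⟩
      exact submodular_le_add_card_mul f hmono hsub (M s) T b hT _ (sub_nonneg.2 hstep)
        fun v => sub_le_sub_right (hmax v) _
    have hgain : (opt - f (M s)) / b ≤ f (M (s + 1)) - f (M s) := by
      rw [div_le_iff₀ hb0]
      linarith
    calc opt - f (M (s + 1)) ≤ (1 - 1 / (b : ℝ)) * (opt - f (M s)) := by
          rw [sub_mul, one_mul, one_div_mul_eq_div]
          linarith
      _ ≤ (1 - 1 / (b : ℝ)) * ((1 - 1 / (b : ℝ)) ^ s * opt) := by gcongr
      _ = (1 - 1 / (b : ℝ)) ^ (s + 1) * opt := by ring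
end

section
/- Combined guarantee of greedy supplier selection and discretized price search: let P = [0,1], for each p ∈ P let F(p) be a nonempty finite collection of feasible supplier sets, let f(p,M) ∈ ℝ be the revenue, and let A assign to each p ∈ P a set A(p) ∈ F(p) with f(p, A(p)) ≥ (1 − 1/e) · max{ f(p,M) : M ∈ F(p) } for every p. Suppose g(p) = f(p, A(p)) is β-Lipschitz on [0,1] for some β ≥ 0. For ε ∈ (0,1], let A(ε) = {0, ε, 2ε, …, ⌊1/ε⌋·ε} ∪ {1}, and let p_DS ∈ A(ε) maximize g over A(ε). Then f(p_DS, A(p_DS)) ≥ (1 − 1/e) · sup{ f(p,M) : p ∈ [0,1], M ∈ F(p) } − β·ε. -/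
/-- The uniform grid `A(ε) = {0, ε, 2ε, …, ⌊1/ε⌋·ε} ∪ {1}`. -/
def grid (ε : ℝ) : Set ℝ :=
  {x : ℝ | ∃ k : ℕ, k ≤ ⌊1 / ε⌋₊ ∧ x = (k : ℝ) * ε} ∪ {1}

/-- Every point of `[0, 1]` has a grid point of `[0, 1]` within distance `ε`. -/
theorem exists_mem_grid_abs_sub_le {ε p : ℝ} (hε : 0 < ε) (hp : p ∈ Set.Icc (0 : ℝ) 1) :
    ∃ x ∈ grid ε, x ∈ Set.Icc (0 : ℝ) 1 ∧ |p - x| ≤ ε := by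
  have hle : (⌊p / ε⌋₊ : ℝ) * ε ≤ p :=
    (le_div_iff₀ hε).mp (Nat.floor_le (div_nonneg hp.1 hε.le))
  have hlt : p < ((⌊p / ε⌋₊ : ℝ) + 1) * ε :=
    (div_lt_iff₀ hε).mp (Nat.lt_floor_add_one (p / ε))
  refine ⟨⌊p / ε⌋₊ * ε, Or.inl ⟨_, Nat.floor_le_floor ?_, rfl⟩,
    ⟨by positivity, hle.trans hp.2⟩, ?_⟩
  · exact div_le_div_of_nonneg_right hp.2 hε.le
  · rw [abs_of_nonneg (sub_nonneg.mpr hle)]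
    linarith

/-- combined guarantee of the `(1 - 1/e)`-approximate greedy supplier
selection oracle `A` and the discretized price search over the grid `A(ε)`:
the returned solution is within a factor `(1 - 1/e)` of the jointly optimal revenue,
up to an additive loss `β·ε`. -/
theorem combined_greedy_discretized_search
    {α : Type*}
    (F : ℝ → Finset α) (hF : ∀ p ∈ Set.Icc (0 : ℝ) 1, (F p).Nonempty)
    (f : ℝ → α → ℝ)
    (A : ℝ → α) (hA : ∀ p ∈ Set.Icc (0 : ℝ) 1, A p ∈ F p)
    (horacle : ∀ p ∈ Set.Icc (0 : ℝ) 1, ∀ M ∈ F p,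
      f p (A p) ≥ (1 - 1 / Real.exp 1) * f p M)
    (β : ℝ) (hβ : 0 ≤ β)
    (hLip : ∀ x ∈ Set.Icc (0 : ℝ) 1, ∀ y ∈ Set.Icc (0 : ℝ) 1,
      |f x (A x) - f y (A y)| ≤ β * |x - y|)
    (ε : ℝ) (hε : ε ∈ Set.Ioc (0 : ℝ) 1)
    (pDS : ℝ) (hpDS : pDS ∈ grid ε)
    (hmax : ∀ x ∈ grid ε, f x (A x) ≤ f pDS (A pDS)) :
    f pDS (A pDS) ≥
      (1 - 1 / Real.exp 1) *
        sSup {x : ℝ | ∃ p ∈ Set.Icc (0 : ℝ) 1, ∃ M ∈ F p, x = f p M} - β * ε := by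
  have hc : 0 < 1 - 1 / Real.exp 1 := by
    rw [sub_pos, div_lt_one (Real.exp_pos 1)]
    exact Real.one_lt_exp_iff.mpr one_pos
  have hbound : sSup {x : ℝ | ∃ p ∈ Set.Icc (0 : ℝ) 1, ∃ M ∈ F p, x = f p M} ≤
      (f pDS (A pDS) + β * ε) / (1 - 1 / Real.exp 1) := by
    refine csSup_le ⟨f 0 (A 0), 0, by simp, A 0, hA 0 (by simp), rfl⟩ ?_
    rintro _ ⟨p, hp, M, hM, rfl⟩
    obtain ⟨x, hxg, hx, hpx⟩ := exists_mem_grid_abs_sub_le hε.1 hp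
    rw [le_div_iff₀' hc]
    linarith [horacle p hp M hM, le_of_abs_le (hLip p hp x hx), hmax x hxg,
      mul_le_mul_of_nonneg_left hpx hβ]
  rw [le_div_iff₀' hc] at hbound
  linarith
end

section
/- Efficiency of the Shapley value: let N be a finite set with |N| ≥ 1 players and v a real-valued function on subsets of N. Then the Shapley values sum to the total value created by the grand coalition: Σ_{u ∈ N} φ_u(v) = v(N) − v(∅), where φ_u(v) = Σ_{S ⊆ N\{u}} ( |S|!·(|N| − |S| − 1)! / |N|! ) · ( v(S∪{u}) − v(S) ). -/
/-- The Shapley value of player `u` for the value function `v` on the finite player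
set `N` (here the whole finite type `ι`):
`φ_u(v) = Σ_{S ⊆ N\{u}} (|S|!·(|N|−|S|−1)!/|N|!)·(v(S∪{u}) − v(S))`. -/
noncomputable def shapleyValue {ι : Type*} [Fintype ι] [DecidableEq ι]
    (v : Finset ι → ℝ) (u : ι) : ℝ :=
  ∑ S ∈ (Finset.univ.erase u).powerset,
    ((S.card.factorial : ℝ) * ((Fintype.card ι - S.card - 1).factorial : ℝ) /
        ((Fintype.card ι).factorial : ℝ)) *
      (v (insert u S) - v S)

/-- Summing over the sets that avoid `u`, after inserting `u`, is summing over the sets that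
contain `u`. -/
theorem sum_powerset_erase_insert {ι M : Type*} [Fintype ι] [DecidableEq ι] [AddCommMonoid M]
    (f : Finset ι → M) (u : ι) :
    ∑ S ∈ (Finset.univ.erase u).powerset, f (insert u S) =
      ∑ T : Finset ι with u ∈ T, f T := by
  refine Finset.sum_nbij' (fun S => insert u S) (fun T => T.erase u) ?_ ?_ ?_ ?_ ?_
  · intro S _
    simp
  · intro T _
    simpa using Finset.erase_subset_erase u T.subset_univ
  · intro S hS
    have hu : u ∉ S := fun h => by simpa using Finset.mem_powerset.mp hS h
    exact Finset.erase_insert hu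
  · intro T hT
    exact Finset.insert_erase (by simpa using hT)
  · intro S _
    rfl

/-- The subsets of `univ.erase u` are the sets that do not contain `u`. -/
theorem powerset_univ_erase {ι : Type*} [Fintype ι] [DecidableEq ι] (u : ι) :
    (Finset.univ.erase u).powerset = Finset.univ.filter fun T : Finset ι => u ∉ T := by
  ext T
  simp [Finset.subset_erase]

/-- Double counting of the pairs `u ∈ T`. -/
theorem sum_sum_filter_mem {ι : Type*} [Fintype ι] [DecidableEq ι] (f : Finset ι → ℝ) :
    ∑ u : ι, ∑ T : Finset ι with u ∈ T, f T = ∑ T : Finset ι, (T.card : ℝ) * f T := by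
  simp_rw [Finset.sum_filter]
  rw [Finset.sum_comm]
  simp

/-- Double counting of the pairs `u ∉ T`. -/
theorem sum_sum_filter_notMem {ι : Type*} [Fintype ι] [DecidableEq ι] (f : Finset ι → ℝ) :
    ∑ u : ι, ∑ T : Finset ι with u ∉ T, f T =
      ∑ T : Finset ι, ((Fintype.card ι - T.card : ℕ) : ℝ) * f T := by
  simp_rw [Finset.sum_filter]
  rw [Finset.sum_comm]
  refine Finset.sum_congr rfl fun T _ => ?_
  rw [← Finset.sum_filter, Finset.sum_const, nsmul_eq_mul, Finset.filter_notMem_eq_sdiff,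
    ← Finset.compl_eq_univ_sdiff, Finset.card_compl]

/-- The total coefficient with which a coalition of size `k` enters the sum of the Shapley
values of `n` players. -/
theorem shapley_coefficient {n k : ℕ} (hn : 1 ≤ n) (hk : k ≤ n) :
    (k : ℝ) * (((k - 1).factorial : ℝ) * ((n - (k - 1) - 1).factorial : ℝ) / (n.factorial : ℝ)) -
      ((n - k : ℕ) : ℝ) * ((k.factorial : ℝ) * ((n - k - 1).factorial : ℝ) / (n.factorial : ℝ)) =
    (if k = n then 1 else 0) - if k = 0 then 1 else 0 := by
  have hfac : (n.factorial : ℝ) ≠ 0 := by exact_mod_cast n.factorial_ne_zero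
  have left_term : (k : ℝ) * (((k - 1).factorial : ℝ) * ((n - (k - 1) - 1).factorial : ℝ) /
      (n.factorial : ℝ)) =
      if k = 0 then 0 else (k.factorial : ℝ) * ((n - k).factorial : ℝ) / (n.factorial : ℝ) := by
    split_ifs with h
    · simp [h]
    · rw [← Nat.mul_factorial_pred h, show n - (k - 1) - 1 = n - k by omega]
      push_cast
      ring
  have right_term : ((n - k : ℕ) : ℝ) * ((k.factorial : ℝ) * ((n - k - 1).factorial : ℝ) /
      (n.factorial : ℝ)) =
      if k = n then 0 else (k.factorial : ℝ) * ((n - k).factorial : ℝ) / (n.factorial : ℝ) := by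
    split_ifs with h
    · simp [h]
    · rw [← Nat.mul_factorial_pred (show n - k ≠ 0 by omega)]
      push_cast
      ring
  rw [left_term, right_term]
  rcases Nat.eq_zero_or_pos k with rfl | hpos
  · have h : (0 : ℕ) ≠ n := by omega
    simp [h, hfac]
  · rcases hk.eq_or_lt with rfl | hlt
    · simp [hpos.ne', hfac]
    · simp [hpos.ne', hlt.ne]

/-- efficiency of the Shapley value: the Shapley values of all players
sum to `v(N) − v(∅)`. -/
theorem shapley_efficiency
    {ι : Type*} [Fintype ι] [DecidableEq ι]
    (hcard : 1 ≤ Fintype.card ι) (v : Finset ι → ℝ) :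
    ∑ u : ι, shapleyValue v u = v Finset.univ - v ∅ := by
  have shapley_eq (u : ι) : shapleyValue v u =
      ∑ T : Finset ι with u ∈ T, (((T.card - 1).factorial : ℝ) *
        ((Fintype.card ι - (T.card - 1) - 1).factorial : ℝ) /
          ((Fintype.card ι).factorial : ℝ)) * v T -
      ∑ T : Finset ι with u ∉ T, ((T.card.factorial : ℝ) *
        ((Fintype.card ι - T.card - 1).factorial : ℝ) /
          ((Fintype.card ι).factorial : ℝ)) * v T := by
    rw [← sum_powerset_erase_insert, ← powerset_univ_erase, ← Finset.sum_sub_distrib]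
    refine Finset.sum_congr rfl fun S hS => ?_
    have hu : u ∉ S := fun h => by simpa using Finset.mem_powerset.mp hS h
    rw [Finset.card_insert_of_notMem hu, Nat.add_sub_cancel, mul_sub]
  simp_rw [shapley_eq]
  rw [Finset.sum_sub_distrib, sum_sum_filter_mem, sum_sum_filter_notMem,
    ← Finset.sum_sub_distrib]
  simp_rw [← mul_assoc, ← sub_mul]
  simp_rw [shapley_coefficient hcard (Finset.card_le_univ _), Finset.card_eq_iff_eq_univ,
    Finset.card_eq_zero, sub_mul, Finset.sum_sub_distrib]
  simp
end

section
/- Concentration of the sampling estimator of the Shapley value: let N be a finite set with n = |N| ≥ 1 players, let v be a real-valued function on subsets of N, fix u ∈ N, and suppose that for every ordering σ of N the marginal contribution X(σ) = v(P_σ(u) ∪ {u}) − v(P_σ(u)) satisfies 0 ≤ X(σ) ≤ c for some constant c > 0. Let σ_1, …, σ_K be K independent orderings of N, each drawn uniformly at random from all n! orderings, and let φ̂_u = (1/K) Σ_{k=1}^K X(σ_k). Then for every δ ∈ (0,1], with probability at least 1 − δ, | φ̂_u − φ_u(v) | ≤ c · sqrt( (1/(2K)) · ln(2/δ) ), where φ_u(v)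 = Σ_{S ⊆ N\{u}} ( |S|!·(n − |S| − 1)! / n! ) · ( v(S∪{u}) − v(S) ) is the Shapley value of u. -/
/-- `predsIn σ u` : the set of players that precede `u` in the ordering `σ` of the
players, where an ordering of the `n` players is a bijection `Fin n ≃ ι`. -/
def predsIn {ι : Type*} [Fintype ι] [DecidableEq ι] {n : ℕ} (σ : Fin n ≃ ι) (u : ι) :
    Finset ι :=
  Finset.univ.filter (fun w => σ.symm w < σ.symm u)

/-- The marginal contribution of `u` in the ordering `σ`:
`X(σ) = v(P_σ(u) ∪ {u}) − v(P_σ(u))`. -/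
def marginal {ι : Type*} [Fintype ι] [DecidableEq ι] {n : ℕ}
    (v : Finset ι → ℝ) (u : ι) (σ : Fin n ≃ ι) : ℝ :=
  v (insert u (predsIn σ u)) - v (predsIn σ u)

open scoped Nat

/-- Bijections intertwining two labellings are families of bijections between the fibres. -/
def subtypeEquivFiberEquiv {α β γ : Type*} (f : α → γ) (g : β → γ) :
    {e : α ≃ β // ∀ a, g (e a) = f a} ≃ ∀ c, {a // f a = c} ≃ {b // g b = c} where
  toFun e c := e.1.subtypeEquiv fun a => by rw [e.2 a]
  invFun e := ⟨Equiv.ofFiberEquiv e, fun a => Equiv.ofFiberEquiv_map e a⟩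
  left_inv e := by ext a; rfl
  right_inv e := by
    funext c
    ext ⟨a, rfl⟩
    rfl

lemma card_predsIn {ι : Type*} [Fintype ι] [DecidableEq ι] {n : ℕ} (σ : Fin n ≃ ι) (u : ι) :
    (predsIn σ u).card = σ.symm u := by
  have h : predsIn σ u = (Finset.Iio (σ.symm u)).map σ.toEmbedding := by
    ext w
    simp [predsIn, Finset.mem_map_equiv]
  rw [h, Finset.card_map, Fin.card_Iio]

lemma predsIn_eq_iff {ι : Type*} [Fintype ι] [DecidableEq ι] {n : ℕ} (σ : Fin n ≃ ι) {u : ι}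
    {S : Finset ι} (hu : u ∉ S) (hS : S.card < n) :
    predsIn σ u = S ↔ ∀ i, (if σ i ∈ S then Ordering.lt else if σ i = u then .eq else .gt) =
      cmp i ⟨S.card, hS⟩ := by
  constructor
  · rintro rfl i
    have h : (⟨(predsIn σ u).card, hS⟩ : Fin n) = σ.symm u := Fin.ext (card_predsIn σ u)
    rw [h]
    rcases lt_trichotomy i (σ.symm u) with hi | hi | hi
    · simp [predsIn, hi, hi.cmp_eq_lt]
    · simp [predsIn, hi]
    · have hne : σ i ≠ u := by rintro rfl; simp at hi
      simp [predsIn, hi.not_gt, hne, hi.cmp_eq_gt]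
  · intro h
    have hs : σ ⟨S.card, hS⟩ = u := by
      have := h ⟨S.card, hS⟩
      grind [cmp_self_eq_eq]
    have hs' : σ.symm u = ⟨S.card, hS⟩ := by rw [← hs, σ.symm_apply_apply]
    ext w
    have hw := h (σ.symm w)
    rw [σ.apply_symm_apply] at hw
    simp only [predsIn, Finset.mem_filter, Finset.mem_univ, true_and, hs', ← cmp_eq_lt_iff, ← hw]
    split_ifs <;> simp_all

lemma card_predsIn_eq {ι : Type*} [Fintype ι] [DecidableEq ι] {n : ℕ} (hn : n = Fintype.card ι)
    {u : ι} {S : Finset ι} (hu : u ∉ S) :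
    (Finset.univ.filter fun σ : Fin n ≃ ι => predsIn σ u = S).card =
      S.card ! * (n - S.card - 1)! := by
  have hS : S.card < n := hn ▸ Finset.card_lt_univ_of_notMem hu
  set f : Fin n → Ordering := fun i => cmp i ⟨S.card, hS⟩ with hf
  set g : ι → Ordering := fun w => if w ∈ S then .lt else if w = u then .eq else .gt with hg
  have hfl : Fintype.card {i // f i = .lt} = S.card := by
    rw [Fintype.card_subtype]
    simp only [hf, cmp_eq_lt_iff, Finset.filter_gt_eq_Iio, Fin.card_Iio]
  have hfe : Fintype.card {i // f i = .eq} = 1 := by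
    rw [Fintype.card_subtype, Finset.card_eq_one]
    exact ⟨⟨S.card, hS⟩, by ext i; simp [hf, cmp_eq_eq_iff]⟩
  have hfg : Fintype.card {i // f i = .gt} = n - S.card - 1 := by
    rw [Fintype.card_subtype]
    simp only [hf, cmp_eq_gt_iff, Finset.filter_lt_eq_Ioi, Fin.card_Ioi]
    omega
  have hgl : Fintype.card {w // g w = .lt} = S.card := by
    rw [Fintype.card_subtype]
    congr 1
    ext w
    grind
  have hge : Fintype.card {w // g w = .eq} = 1 := by
    rw [Fintype.card_subtype, Finset.card_eq_one]
    refine ⟨u, ?_⟩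
    ext w
    grind
  have hgg : Fintype.card {w // g w = .gt} = n - S.card - 1 := by
    rw [Fintype.card_subtype, hn, Nat.sub_sub, ← Finset.card_insert_of_notMem hu,
      ← Finset.card_compl]
    congr 1
    ext w
    simp only [Finset.mem_filter, Finset.mem_univ, true_and, Finset.mem_compl, Finset.mem_insert]
    grind
  have e (c : Ordering) : Nonempty ({i // f i = c} ≃ {w // g w = c}) := by
    refine ⟨Fintype.equivOfCardEq ?_⟩
    cases c
    · rw [hfl, hgl]
    · rw [hfe, hge]
    · rw [hfg, hgg]
  simp_rw [predsIn_eq_iff _ hu hS]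
  rw [← Fintype.card_subtype, Fintype.card_congr (subtypeEquivFiberEquiv f g), Fintype.card_pi]
  simp_rw [fun c => Fintype.card_equiv (e c).some]
  have huniv : (Finset.univ : Finset Ordering) = {.lt, .eq, .gt} := rfl
  rw [huniv, Finset.prod_insert (by decide), Finset.prod_pair (by decide), hfl, hfe, hfg]
  simp

lemma sum_marginal {ι : Type*} [Fintype ι] [DecidableEq ι] {n : ℕ} (hn : n = Fintype.card ι)
    (v : Finset ι → ℝ) (u : ι) :
    ∑ σ : Fin n ≃ ι, marginal v u σ = n ! * shapleyValue v u := by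
  have hmaps : ∀ σ ∈ (Finset.univ : Finset (Fin n ≃ ι)),
      predsIn σ u ∈ (Finset.univ.erase u).powerset := by
    intro σ _
    rw [Finset.mem_powerset, Finset.subset_erase]
    simp [predsIn]
  rw [← Finset.sum_fiberwise_of_maps_to hmaps, shapleyValue, Finset.mul_sum]
  refine Finset.sum_congr rfl fun S hS => ?_
  have hu : u ∉ S := (Finset.subset_erase.1 (Finset.mem_powerset.1 hS)).2
  rw [Finset.sum_congr rfl (g := fun _ => v (insert u S) - v S), Finset.sum_const,
    card_predsIn_eq hn hu, ← hn, nsmul_eq_mul]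
  · push_cast
    field_simp
  · intro σ hσ
    rw [marginal, (Finset.mem_filter.1 hσ).2]

open MeasureTheory ProbabilityTheory in
/-- **Hoeffding's inequality** for uniform sampling with replacement from a finite type. -/
lemma ncard_le_sum_sub_le {α : Type*} [Fintype α] [Nonempty α] {f : α → ℝ} {a b m : ℝ}
    (hf : ∀ x, f x ∈ Set.Icc a b) (hm : ∑ x, f x = Fintype.card α * m) (K : ℕ) {ε : ℝ}
    (hε : 0 ≤ ε) :
    ({ω : Fin K → α | ε ≤ ∑ k, (f (ω k) - m)}.ncard : ℝ) ≤
      Real.exp (-2 * ε ^ 2 / (K * (b - a) ^ 2)) * Fintype.card (Fin K → α) := by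
  let : MeasurableSpace α := ⊤
  have : DiscreteMeasurableSpace α := ⟨fun _ => trivial⟩
  set μ : Measure α := uniformOn Set.univ with hμ
  have : IsProbabilityMeasure μ := isProbabilityMeasure_uniformOn Set.finite_univ Set.univ_nonempty
  have hmean : ∫ x, f x ∂μ = m := by
    rw [integral_fintype Integrable.of_finite]
    have h1 (x : α) : μ.real {x} = (Fintype.card α : ℝ)⁻¹ := by
      rw [hμ, measureReal_def, uniformOn_univ]
      simp
    simp_rw [h1, smul_eq_mul]
    rw [← Finset.mul_sum, hm]
    field_simp
  have hsub : HasSubgaussianMGF (fun x => f x - m) ((‖b - a‖₊ / 2) ^ 2) μ := by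
    have := hasSubgaussianMGF_of_mem_Icc (μ := μ) (Measurable.of_discrete (f := f)).aemeasurable
      (ae_of_all _ hf)
    rwa [hmean] at this
  have hpi : Measure.pi (fun _ : Fin K => μ) = uniformOn Set.univ := by
    rw [hμ, ← uniformOn_pi, Set.pi_univ]
  have hindep : iIndepFun (fun (k : Fin K) (ω : Fin K → α) => f (ω k) - m)
      (Measure.pi fun _ => μ) :=
    iIndepFun_pi (X := fun _ x => f x - m) fun _ => Measurable.of_discrete.aemeasurable
  have hsubk (k : Fin K) : HasSubgaussianMGF (fun ω : Fin K → α => f (ω k) - m)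
      ((‖b - a‖₊ / 2) ^ 2) (Measure.pi fun _ => μ) := by
    refine HasSubgaussianMGF.of_map (Y := fun ω : Fin K → α => ω k) (X := fun x => f x - m)
      (measurable_pi_apply k).aemeasurable ?_
    rwa [(measurePreserving_eval (fun _ : Fin K => μ) k).map_eq]
  have key := HasSubgaussianMGF.measure_sum_ge_le_of_iIndepFun hindep (s := Finset.univ)
    (fun k _ => hsubk k) hε
  rw [hpi, measureReal_def, uniformOn_univ, Measure.count_apply (Set.toFinite _).measurableSet,
    ← (Set.toFinite _).cast_ncard_eq] at key
  simp only [ENNReal.toReal_div, ENNReal.toReal_natCast, ENat.toENNReal_coe] at key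
  rw [div_le_iff₀ (by positivity)] at key
  refine key.trans_eq ?_
  congr 2
  simp only [Finset.sum_const, Finset.card_univ, Fintype.card_fin, nsmul_eq_mul]
  push_cast
  rw [Real.norm_eq_abs, div_pow, sq_abs,
    show 2 * ((K : ℝ) * ((b - a) ^ 2 / 2 ^ 2)) = K * (b - a) ^ 2 / 2 by ring, div_div_eq_mul_div]
  ring

lemma ncard_abs_mean_sub_gt {α : Type*} [Fintype α] [Nonempty α] {f : α → ℝ} {c m : ℝ}
    (hf : ∀ x, f x ∈ Set.Icc 0 c) (hm : ∑ x, f x = Fintype.card α * m) {K : ℕ} (hK : 1 ≤ K)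
    {t : ℝ} (ht : 0 ≤ t) :
    ({ω : Fin K → α | t < |1 / (K : ℝ) * ∑ k, f (ω k) - m|}.ncard : ℝ) ≤
      2 * Real.exp (-2 * K * t ^ 2 / c ^ 2) * Fintype.card (Fin K → α) := by
  have hK0 : (0 : ℝ) < K := by exact_mod_cast hK
  have hupper := ncard_le_sum_sub_le hf hm K (ε := K * t) (by positivity)
  have hlower := ncard_le_sum_sub_le (f := fun x => -f x) (a := -c) (b := 0) (m := -m)
    (fun x => by simpa [and_comm] using hf x) (by simp [hm]) K (ε := K * t) (by positivity)
  have hexp : -2 * ((K : ℝ) * t) ^ 2 / (K * c ^ 2) = -2 * K * t ^ 2 / c ^ 2 := by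
    rw [show -2 * ((K : ℝ) * t) ^ 2 = K * (-2 * K * t ^ 2) by ring,
      mul_div_mul_left _ _ hK0.ne']
  rw [sub_zero, hexp] at hupper
  rw [zero_sub, neg_neg, hexp] at hlower
  have hsubset : {ω : Fin K → α | t < |1 / (K : ℝ) * ∑ k, f (ω k) - m|} ⊆
      {ω | K * t ≤ ∑ k, (f (ω k) - m)} ∪ {ω | K * t ≤ ∑ k, (-f (ω k) - -m)} := by
    intro ω hω
    have hω : t < |1 / (K : ℝ) * ∑ k, f (ω k) - m| := hω
    have hmul : (K : ℝ) * (1 / K * ∑ k, f (ω k) - m) = ∑ k, f (ω k) - K * m := by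
      field_simp
    simp only [Set.mem_union, Set.mem_ofPred_eq, Finset.sum_sub_distrib, Finset.sum_neg_distrib,
      Finset.sum_const, Finset.card_univ, Fintype.card_fin, nsmul_eq_mul]
    rcases lt_abs.1 hω with h | h
    · left
      nlinarith
    · right
      nlinarith
  have hcard := (Set.ncard_le_ncard hsubset (Set.toFinite _)).trans (Set.ncard_union_le _ _)
  have hcard' : ({ω : Fin K → α | t < |1 / (K : ℝ) * ∑ k, f (ω k) - m|}.ncard : ℝ) ≤
      {ω : Fin K → α | K * t ≤ ∑ k, (f (ω k) - m)}.ncard +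
        {ω : Fin K → α | K * t ≤ ∑ k, (-f (ω k) - -m)}.ncard := by
    exact_mod_cast hcard
  linarith

/-- concentration of the sampling estimator of the Shapley value: if all
marginal contributions lie in `[0,c]` and `φ̂_u` is the average of the marginal
contribution over `K` independent uniformly random orderings (modelled by the uniform
distribution on `K`-tuples of orderings, i.e. by counting), then with probability at
least `1 − δ`, `|φ̂_u − φ_u(v)| ≤ c·sqrt((1/(2K))·ln(2/δ))`. -/
theorem shapley_sampling_concentration
    {ι : Type*} [Fintype ι] [DecidableEq ι]
    (n : ℕ) (hn : n = Fintype.card ι) (hn1 : 1 ≤ n)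
    (v : Finset ι → ℝ) (u : ι) (c : ℝ) (hc : 0 < c)
    (hX : ∀ σ : Fin n ≃ ι, 0 ≤ marginal v u σ ∧ marginal v u σ ≤ c)
    (K : ℕ) (hK : 1 ≤ K) (δ : ℝ) (hδ : δ ∈ Set.Ioc (0 : ℝ) 1) :
    (({ω : Fin K → (Fin n ≃ ι) |
        |(1 / (K : ℝ)) * (∑ k : Fin K, marginal v u (ω k)) - shapleyValue v u| ≤
          c * Real.sqrt ((1 / (2 * (K : ℝ))) * Real.log (2 / δ))} : Set _).ncard : ℝ)
      ≥ (1 - δ) * (Fintype.card (Fin K → (Fin n ≃ ι)) : ℝ) := by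
  obtain ⟨hδ0, hδ1⟩ := hδ
  have hK0 : (0 : ℝ) < K := by exact_mod_cast hK
  have : Nonempty (Fin n ≃ ι) := ⟨(Fintype.equivFinOfCardEq hn.symm).symm⟩
  have hcard : Fintype.card (Fin n ≃ ι) = n ! := by
    rw [Fintype.card_equiv (Classical.arbitrary _), Fintype.card_fin]
  have hlog : 0 ≤ Real.log (2 / δ) := Real.log_nonneg (by rw [le_div_iff₀ hδ0]; linarith)
  set t : ℝ := c * Real.sqrt ((1 / (2 * (K : ℝ))) * Real.log (2 / δ)) with ht
  have htail := ncard_abs_mean_sub_gt hX (by rw [hcard, sum_marginal hn]) hK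
    (t := t) (by positivity)
  have hexp : 2 * Real.exp (-2 * K * t ^ 2 / c ^ 2) = δ := by
    have h : -2 * K * t ^ 2 / c ^ 2 = -Real.log (2 / δ) := by
      rw [ht, mul_pow, Real.sq_sqrt (by positivity)]
      field_simp
    rw [h, Real.exp_neg, Real.exp_log (by positivity)]
    field_simp
  rw [hexp] at htail
  set A : Set (Fin K → (Fin n ≃ ι)) :=
    {ω | |(1 / (K : ℝ)) * (∑ k : Fin K, marginal v u (ω k)) - shapleyValue v u| ≤ t}
  have hcompl : Aᶜ = {ω : Fin K → (Fin n ≃ ι) |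
      t < |1 / (K : ℝ) * ∑ k, marginal v u (ω k) - shapleyValue v u|} := by
    ext ω
    simp [A]
  have hadd : (A.ncard : ℝ) + Aᶜ.ncard = Fintype.card (Fin K → (Fin n ≃ ι)) := by
    rw [← Nat.card_eq_fintype_card]
    exact_mod_cast Set.ncard_add_ncard_compl A
  rw [← hcompl] at htail
  linarith
end
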